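/- Let H ⊂ ℂ^n be a compact convex set satisfying (as a subset of ℝ^{2n}) the Markov–Lipschitz inequality with constant M > 0, and let ν be a positive Borel measure on H with ν(H) ≤ 1 satisfying the uniform density bound: there exist T > 0 and r_0 > 0 such that ν(B(z,r)) ≥ r^T for all z ∈ H and 0 < r < r_0. Let w be a real polynomial in the 2n real coordinates with w > 0 on H, and set Q = −log w on H. For each d, let a^{*,d} ∈ H^{s(d)} be a point maximizing |VDM_d^Q| over H^{s(d)} (a weighted Fekete configuration of order d), and assume that the empirical measures (1/s(d)) Σ_{j=1}^{s(d)} δ(a^{*,d}_j) converge weak-* to some μ ∈ 𝓜(H) as d → ∞. Then for every open neighborhood G ⊆ 𝓜(H) of μ, liminf_{d→∞} log J_d^Q(μ,G) ≥ log δ̄^w(H); consequently inf_{G ∋ μ} liminf_{d→∞} log J_d^Q(μ,G) ≥ log δ̄^w(H). -/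

import Mathlib

open MeasureTheory Filter Topology ENNReal

noncomputable section

/-- Points of `ℂⁿ` (with the Euclidean metric). -/
abbrev Pt (n : ℕ) := EuclideanSpace ℂ (Fin n)

instance Pt.measurableSpace (n : ℕ) : MeasurableSpace (Pt n) := borel _

instance Pt.borelSpace (n : ℕ) : BorelSpace (Pt n) := ⟨rfl⟩

/-- `s(d) = binomial(d+n, n)`, the number of multi-indices `α ∈ ℕⁿ` with `|α| ≤ d`. -/
def sdim (n d : ℕ) : ℕ := (d + n).choose n

lemma sdim_pos (n d : ℕ) : 0 < sdim n d := Nat.choose_pos (Nat.le_add_left n d)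

/-- `E` is an enumeration of the multi-indices `α ∈ ℕⁿ` with `|α| ≤ d`. -/
def IsEnum (n d : ℕ) (E : Fin (sdim n d) → (Fin n → ℕ)) : Prop :=
  Function.Injective E ∧ ∀ α : Fin n → ℕ, ((∑ i, α i) ≤ d ↔ α ∈ Set.range E)

/-- The Vandermonde determinant `VDM_d(a_1, …, a_{s(d)}) = det [a_j^{α_i}]`. -/
def VDM (n d : ℕ) (E : Fin (sdim n d) → (Fin n → ℕ))
    (a : Fin (sdim n d) → Pt n) : ℂ :=
  Matrix.det (Matrix.of fun i j => ∏ k, (a j k) ^ (E i k))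

/-- `|VDM_d^Q(a)| = |VDM_d(a)| · w(a_1)^d ⋯ w(a_s)^d` where `w = e^{-Q}`, as a member
of `ℝ≥0∞`. -/
def absVDMQ (n d : ℕ) (E : Fin (sdim n d) → (Fin n → ℕ)) (H : Set (Pt n)) (Q : H → ℝ)
    (a : Fin (sdim n d) → H) : ℝ≥0∞ :=
  ENNReal.ofReal (‖VDM n d E (fun j => (a j : Pt n))‖ *
    ∏ j, Real.exp (-(d : ℝ) * Q (a j)))

/-- The empirical measure `(1/s) ∑_j δ_{a_j}` of a tuple of points. -/
def emp {X : Type*} [MeasurableSpace X] {s : ℕ} (a : Fin s → X) : Measure X :=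
  ((s : ℝ≥0∞))⁻¹ • ∑ j, Measure.dirac (a j)

lemma emp_univ {X : Type*} [MeasurableSpace X] {s : ℕ} (hs : s ≠ 0) (a : Fin s → X) :
    emp a Set.univ = 1 := by
  have : (emp a) Set.univ = ((s : ℝ≥0∞))⁻¹ * ∑ j : Fin s, (Measure.dirac (a j)) Set.univ := by
    simp [emp, Measure.smul_apply, Measure.finset_sum_apply]
  rw [this]
  simp only [measure_univ, Finset.sum_const, Finset.card_univ, Fintype.card_fin, nsmul_eq_mul,
    mul_one]
  exact ENNReal.inv_mul_cancel (by exact_mod_cast hs) (by simp)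

/-- The empirical probability measure `(1/s) ∑_j δ_{a_j}` of a tuple of points. -/
def empPM {X : Type*} [MeasurableSpace X] {s : ℕ} (hs : s ≠ 0) (a : Fin s → X) :
    ProbabilityMeasure X := ⟨emp a, ⟨emp_univ hs a⟩⟩

/-- `G̃_s(μ)`: the tuples in `H^s` whose empirical measure lies in `G`. -/
def Gtilde {n : ℕ} (d : ℕ) (H : Set (Pt n)) (G : Set (ProbabilityMeasure H)) :
    Set (Fin (sdim n d) → H) :=
  {a | empPM (sdim_pos n d).ne' a ∈ G}

/-- `J_d^Q(μ, G) = (∫_{G̃_s(μ)} |VDM_d^Q(a)|² dν^{⊗s}(a))^{1/(2ds)}`. -/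
def Jd (n d : ℕ) (E : Fin (sdim n d) → (Fin n → ℕ)) (H : Set (Pt n)) (ν : Measure H)
    (Q : H → ℝ) (G : Set (ProbabilityMeasure H)) : ℝ≥0∞ :=
  (∫⁻ a in Gtilde d H G, (absVDMQ n d E H Q a) ^ 2
      ∂(Measure.pi fun _ : Fin (sdim n d) => ν)) ^ (1 / (2 * d * sdim n d) : ℝ)

/-- `W_d^Q(μ, G) = sup { |VDM_d^Q(a)|^{1/(ds)} : a ∈ G̃_s(μ) }`. -/
def Wd (n d : ℕ) (E : Fin (sdim n d) → (Fin n → ℕ)) (H : Set (Pt n))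
    (Q : H → ℝ) (G : Set (ProbabilityMeasure H)) : ℝ≥0∞ :=
  ⨆ a ∈ Gtilde d H G, (absVDMQ n d E H Q a) ^ (1 / (d * sdim n d) : ℝ)

/-- `J^Q(μ) = inf_{G ∋ μ} limsup_{d → ∞} J_d^Q(μ, G)`, the infimum being over all open
neighborhoods `G` of `μ` in `𝓜(H)`. -/
def JQ (n : ℕ) (E : ∀ d, Fin (sdim n d) → (Fin n → ℕ)) (H : Set (Pt n)) (ν : Measure H)
    (Q : H → ℝ) (μ : ProbabilityMeasure H) : ℝ≥0∞ :=
  ⨅ G ∈ {G : Set (ProbabilityMeasure H) | IsOpen G ∧ μ ∈ G},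
    limsup (fun d => Jd n d (E d) H ν Q G) atTop

/-- `W^Q(μ) = inf_{G ∋ μ} limsup_{d → ∞} W_d^Q(μ, G)`, the infimum being over all open
neighborhoods `G` of `μ` in `𝓜(H)`. -/
def WQ (n : ℕ) (E : ∀ d, Fin (sdim n d) → (Fin n → ℕ)) (H : Set (Pt n))
    (Q : H → ℝ) (μ : ProbabilityMeasure H) : ℝ≥0∞ :=
  ⨅ G ∈ {G : Set (ProbabilityMeasure H) | IsOpen G ∧ μ ∈ G},
    limsup (fun d => Wd n d (E d) H Q G) atTop

/-- `δ̄^w(H) = lim sup_d (sup_{a ∈ H^{s(d)}} |VDM_d^Q(a)|)^{1/(d·s(d))}` where `w = e^{-Q}`. -/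
def deltaBar (n : ℕ) (E : ∀ d, Fin (sdim n d) → (Fin n → ℕ)) (H : Set (Pt n))
    (Q : H → ℝ) : ℝ≥0∞ :=
  limsup (fun d => (⨆ a : Fin (sdim n d) → H, absVDMQ n d (E d) H Q a)
    ^ (1 / (d * sdim n d) : ℝ)) atTop

/-- The density condition on `(H, ν)`: there is `T > 0` such that for every `z₀ ∈ H`
there is `r(z₀) > 0` with `ν(B(z₀,r)) ≥ r^T` for all `0 < r < r(z₀)`. -/
def DensityCond {n : ℕ} (H : Set (Pt n)) (ν : Measure H) : Prop :=
  ∃ T : ℝ, 0 < T ∧ ∀ z₀ : H, ∃ r₀ > 0, ∀ r : ℝ, 0 < r → r < r₀ →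
    ENNReal.ofReal (r ^ T) ≤ ν (Metric.ball z₀ r)

/-- The `2n` real coordinates of a point `z = x + iy ∈ ℂⁿ ≅ ℝ^{2n}`. -/
def realCoords {n : ℕ} (z : Pt n) : (Fin n) ⊕ (Fin n) → ℝ :=
  Sum.elim (fun j => (z j).re) (fun j => (z j).im)

/-- `H ⊂ ℂⁿ ≅ ℝ^{2n}` satisfies the Markov–Lipschitz inequality with constant `M`:
`|p(x) - p(y)| ≤ M (deg p)² (sup_H |p|) |x - y|` for all real polynomials `p` in the `2n`
real coordinates and all `x, y ∈ H`. -/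
def MarkovLip (n : ℕ) (H : Set (Pt n)) (M : ℝ) : Prop :=
  ∀ p : MvPolynomial ((Fin n) ⊕ (Fin n)) ℝ, ∀ x ∈ H, ∀ y ∈ H,
    |MvPolynomial.eval (realCoords x) p - MvPolynomial.eval (realCoords y) p| ≤
      M * (p.totalDegree : ℝ) ^ 2 *
        sSup ((fun z : Pt n => |MvPolynomial.eval (realCoords z) p|) '' H) * dist x y

/-! ### Determinant lemmas -/

/-- Leja-type construction. -/
lemma leja_aux {X : Type*} [TopologicalSpace X] [CompactSpace X] [Nonempty X] (s : ℕ) :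
    ∀ (f : Fin s → X → ℂ), (∀ i, Continuous (f i)) →
    ∃ (p : Fin s → X → ℂ) (N : Fin s → ℝ) (a : Fin s → X),
      (∀ i, p i - f i ∈ Submodule.span ℂ (f '' Set.Iio i)) ∧ (∀ i x, ‖p i x‖ ≤ N i) ∧
      (∏ i, N i) ≤ ‖Matrix.det (Matrix.of fun i j => f i (a j))‖ := by
  induction s with
  | zero =>
    intro f hf
    exact ⟨fun i => i.elim0, fun i => i.elim0, fun i => i.elim0, fun i => i.elim0,
      fun i => i.elim0, by simp⟩
  | succ s ih =>
    intro f hf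
    obtain ⟨p, N, a, hp, hN, hprod⟩ := ih (fun i => f i.castSucc) (fun i => hf _)
    have himg : ∀ i : Fin s, (fun i : Fin s => f i.castSucc) '' Set.Iio i
        ⊆ f '' Set.Iio i.castSucc := by
      rintro i _ ⟨j, hj, rfl⟩
      exact ⟨j.castSucc, by simpa using hj, rfl⟩
    set D : ℂ := Matrix.det (Matrix.of fun i j : Fin s => f i.castSucc (a j)) with hD
    -- expansion along the last column
    have hexp : ∃ c : Fin s → ℂ, ∀ x : X,
        Matrix.det (Matrix.of fun i j : Fin (s+1) => f i (Fin.snoc (α := fun _ => X) a x j))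
          = D * f (Fin.last s) x + ∑ j, c j * f j.castSucc x := by
      refine ⟨fun i => (-1) ^ ((i.castSucc : ℕ) + (Fin.last s : ℕ)) *
        Matrix.det (Matrix.of fun i' j' : Fin s => f (i.castSucc.succAbove i') (a j')), fun x => ?_⟩
      rw [Matrix.det_succ_column _ (Fin.last s), Fin.sum_univ_castSucc, add_comm]
      congr 1
      · have : ((-1 : ℂ)) ^ ((Fin.last s : ℕ) + (Fin.last s : ℕ)) = 1 := by
          rw [← two_mul, pow_mul]; simp
        rw [this]
        simp only [Matrix.of_apply, Fin.snoc_last, one_mul]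
        rw [mul_comm, hD]
        congr 2
        ext i j
        simp
      · refine Finset.sum_congr rfl fun i _ => ?_
        simp only [Matrix.of_apply, Fin.snoc_last]
        rw [mul_right_comm]
        congr 2
        congr 1
        ext i' j'
        simp
    obtain ⟨c, hc⟩ := hexp
    obtain ⟨pl, hpl, hplD⟩ : ∃ pl : X → ℂ, pl - f (Fin.last s) ∈
        Submodule.span ℂ (f '' Set.Iio (Fin.last s)) ∧ Continuous pl ∧
        ∀ x, Matrix.det (Matrix.of fun i j : Fin (s+1) =>
          f i (Fin.snoc (α := fun _ => X) a x j)) = D * pl x ∨ D = 0 := by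
      by_cases h0 : D = 0
      · exact ⟨f (Fin.last s), by simp, hf _, fun _ => Or.inr h0⟩
      · refine ⟨fun x => f (Fin.last s) x + ∑ j, (c j / D) * f j.castSucc x, ?_, ?_, ?_⟩
        · have : (fun x => f (Fin.last s) x + ∑ j, (c j / D) * f j.castSucc x) - f (Fin.last s)
              = ∑ j : Fin s, (c j / D) • f j.castSucc := by
            ext x; simp
          rw [this]
          refine Submodule.sum_mem _ fun j _ => Submodule.smul_mem _ _ (Submodule.subset_span ?_)
          exact ⟨j.castSucc, by simp [Fin.castSucc_lt_last], rfl⟩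
        · have := hf
          fun_prop
        · intro x
          left
          rw [hc, mul_add, Finset.mul_sum]
          congr 1
          refine Finset.sum_congr rfl fun j _ => ?_
          field_simp
    obtain ⟨x0, -, hx0⟩ := isCompact_univ.exists_isMaxOn Set.univ_nonempty
      (f := fun x => ‖pl x‖) (by have := hplD.1; fun_prop)
    have hmax : ∀ x, ‖pl x‖ ≤ ‖pl x0‖ := fun x => hx0 (Set.mem_univ x)
    refine ⟨Fin.snoc (α := fun _ => X → ℂ) p pl, Fin.snoc (α := fun _ => ℝ) N
      (‖pl x0‖), Fin.snoc (α := fun _ => X) a x0, ?_, ?_, ?_⟩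
    · intro i
      refine Fin.lastCases ?_ (fun i => ?_) i
      · simpa using hpl
      · simpa using Submodule.span_mono (himg i) (hp i)
    · intro i x
      refine Fin.lastCases ?_ (fun i => ?_) i
      · simpa using hmax x
      · simpa using hN i x
    · rw [Fin.prod_univ_castSucc]
      simp only [Fin.snoc_castSucc, Fin.snoc_last]
      refine (mul_le_mul_of_nonneg_right hprod (norm_nonneg _)).trans ?_
      rcases hplD.2 x0 with h | h
      · rw [h, norm_mul]
      · rw [h]; simp

lemma det_upper {X : Type*} (s : ℕ) (f p : Fin s → X → ℂ) (N : Fin s → ℝ)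
    (hp : ∀ i, p i - f i ∈ Submodule.span ℂ (f '' Set.Iio i)) (hN : ∀ i x, ‖p i x‖ ≤ N i)
    (a : Fin s → X) :
    ‖Matrix.det (Matrix.of fun i j => f i (a j))‖ ≤ s.factorial * ∏ i, N i := by
  have hc : ∀ i, ∃ c : Fin s → ℂ, (∀ j, i ≤ j → c j = 0) ∧ p i - f i = ∑ j, c j • f j := by
    intro i
    obtain ⟨l, hl, hl2⟩ := (Finsupp.mem_span_image_iff_linearCombination ℂ).1 (hp i)
    refine ⟨l, fun j hj => ?_, ?_⟩
    · by_contra h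
      have : j ∈ Set.Iio i := (Finsupp.mem_supported _ _).1 hl (by simpa using h)
      exact absurd hj (not_le.2 this)
    · rw [← hl2, Finsupp.linearCombination_apply, Finsupp.sum_fintype _ _ (by simp)]
  choose c hc0 hc using hc
  have hdet : Matrix.det (Matrix.of fun i j => p i (a j)) =
      Matrix.det (Matrix.of fun i j => f i (a j)) := by
    have hmul : (Matrix.of fun i j => p i (a j)) =
        (1 + Matrix.of c) * (Matrix.of fun i j => f i (a j)) := by
      ext i j
      rw [Matrix.add_mul, Matrix.one_mul, Matrix.add_apply, Matrix.mul_apply]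
      have := congrFun (hc i) (a j)
      simp only [Pi.sub_apply, Finset.sum_apply, Pi.smul_apply, smul_eq_mul] at this
      simp only [Matrix.of_apply]
      rw [← this]; ring
    rw [hmul, Matrix.det_mul, Matrix.det_of_isLowerTriangular]
    · simp [hc0]
    · intro i j hij
      have hij' : i < j := by simpa using hij
      simp [Matrix.one_apply_ne hij'.ne, hc0 i j hij'.le]
  rw [← hdet, Matrix.det_apply]
  refine (norm_sum_le _ _).trans ?_
  have : ∀ σ ∈ (Finset.univ : Finset (Equiv.Perm (Fin s))),
      ‖Equiv.Perm.sign σ • ∏ i, (Matrix.of fun i j => p i (a j)) (σ i) i‖ ≤ ∏ i, N i := by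
    intro σ _
    have h1 : ‖Equiv.Perm.sign σ • ∏ i, (Matrix.of fun i j => p i (a j)) (σ i) i‖
        = ∏ i, ‖p (σ i) (a i)‖ := by
      rcases Int.units_eq_one_or (Equiv.Perm.sign σ) with h | h <;> simp [h, norm_prod]
    rw [h1]
    calc _ ≤ ∏ i, N (σ i) := Finset.prod_le_prod (fun _ _ => norm_nonneg _) (fun i _ => hN _ _)
      _ = ∏ i, N i := Equiv.prod_comp σ N
  refine (Finset.sum_le_sum this).trans ?_
  simp [Fintype.card_perm]

/-! ### Weighted monomials -/

/-- The weighted monomial `z^α W(z)^d`. -/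
def wmon {n : ℕ} {H : Set (Pt n)} (W : H → ℝ) (d : ℕ) (α : Fin n → ℕ) : H → ℂ :=
  fun z => (∏ k, ((z : Pt n) k) ^ (α k)) * ((W z : ℝ) : ℂ) ^ d

lemma wmon_mul {n : ℕ} {H : Set (Pt n)} (W : H → ℝ) (d e : ℕ) (α β : Fin n → ℕ) :
    wmon W d α * wmon W e β = wmon W (d + e) (α + β) := by
  ext z
  simp only [wmon, Pi.mul_apply, Pi.add_apply, pow_add, Finset.prod_mul_distrib]
  ring

lemma wmon_continuous {n : ℕ} {H : Set (Pt n)} (W : H → ℝ) (hW : Continuous W)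
    (d : ℕ) (α : Fin n → ℕ) : Continuous (wmon W d α) := by
  unfold wmon
  fun_prop

/-- span of weighted monomials which are lexicographically smaller than `α`. -/
def lowSpan {n : ℕ} {H : Set (Pt n)} (W : H → ℝ) (d : ℕ) (α : Fin n → ℕ) :
    Submodule ℂ (H → ℂ) :=
  Submodule.span ℂ (wmon W d '' {β | toLex β < toLex α ∧ ∑ i, β i ≤ d})

lemma lowSpan_mul_left {n : ℕ} {H : Set (Pt n)} (W : H → ℝ) (d e : ℕ) (α β : Fin n → ℕ)
    (hα : ∑ i, α i ≤ d) (v : H → ℂ) (hv : v ∈ lowSpan W e β) :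
    wmon W d α * v ∈ lowSpan W (d + e) (α + β) := by
  have : lowSpan W e β ≤ (lowSpan W (d + e) (α + β)).comap
      (LinearMap.mulLeft ℂ (wmon W d α)) := by
    rw [lowSpan, Submodule.span_le]
    rintro _ ⟨γ, ⟨h1, h2⟩, rfl⟩
    refine Submodule.subset_span ⟨α + γ, ⟨?_, ?_⟩, (wmon_mul W d e α γ).symm⟩
    · rw [toLex_add, toLex_add]
      exact add_lt_add_right h1 _
    · simp only [Pi.add_apply, Finset.sum_add_distrib]; omega
  exact this hv

lemma lowSpan_mul {n : ℕ} {H : Set (Pt n)} (W : H → ℝ) (d e : ℕ) (α β : Fin n → ℕ)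
    (u v : H → ℂ) (hu : u ∈ lowSpan W d α) (hv : v ∈ lowSpan W e β) :
    u * v ∈ lowSpan W (d + e) (α + β) := by
  have : lowSpan W d α ≤ (lowSpan W (d + e) (α + β)).comap
      (LinearMap.mulRight ℂ v) := by
    rw [lowSpan, Submodule.span_le]
    rintro _ ⟨γ, ⟨h1, h2⟩, rfl⟩
    have h3 := lowSpan_mul_left W d e γ β h2 v hv
    have h4 : lowSpan W (d + e) (γ + β) ≤ lowSpan W (d + e) (α + β) := by
      refine Submodule.span_mono (Set.image_mono ?_)
      rintro δ ⟨h5, h6⟩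
      refine ⟨h5.trans ?_, h6⟩
      rw [toLex_add, toLex_add]
      exact add_lt_add_left h1 _
    exact h4 h3
  exact this hu

/-- `p` is a weighted monic polynomial with leading term `α`. -/
def IsMon {n : ℕ} {H : Set (Pt n)} (W : H → ℝ) (d : ℕ) (α : Fin n → ℕ) (p : H → ℂ) : Prop :=
  p - wmon W d α ∈ lowSpan W d α

lemma IsMon.self {n : ℕ} {H : Set (Pt n)} (W : H → ℝ) (d : ℕ) (α : Fin n → ℕ) :
    IsMon W d α (wmon W d α) := by simp [IsMon]

lemma IsMon.mul {n : ℕ} {H : Set (Pt n)} {W : H → ℝ} {d e : ℕ} {α β : Fin n → ℕ}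
    {p p' : H → ℂ} (hp : IsMon W d α p) (hp' : IsMon W e β p')
    (hα : ∑ i, α i ≤ d) (hβ : ∑ i, β i ≤ e) : IsMon W (d + e) (α + β) (p * p') := by
  unfold IsMon at *
  have : p * p' - wmon W (d + e) (α + β) =
      wmon W d α * (p' - wmon W e β) + wmon W e β * (p - wmon W d α)
        + (p - wmon W d α) * (p' - wmon W e β) := by
    rw [← wmon_mul]; ring
  rw [this]
  refine Submodule.add_mem _ (Submodule.add_mem _ ?_ ?_) ?_
  · exact lowSpan_mul_left W d e α β hα _ hp'
  · have := lowSpan_mul_left W e d β α hβ _ hp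
    rwa [add_comm e d, add_comm β α] at this
  · exact lowSpan_mul W d e α β _ _ hp hp'

lemma IsMon.pow {n : ℕ} {H : Set (Pt n)} {W : H → ℝ} {d : ℕ} {α : Fin n → ℕ}
    {p : H → ℂ} (hp : IsMon W d α p) (hα : ∑ i, α i ≤ d) (q : ℕ) :
    IsMon W (q * d) (q • α) (p ^ q) := by
  induction q with
  | zero =>
    have : wmon W 0 (0 : Fin n → ℕ) = 1 := by ext z; simp [wmon]
    simp [IsMon, this]
  | succ q ih =>
    rw [pow_succ, add_mul, one_mul, add_smul, one_smul]
    refine ih.mul hp ?_ hα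
    simp only [Pi.smul_apply, smul_eq_mul, ← Finset.mul_sum]
    exact Nat.mul_le_mul_left _ hα

/-- The index set `{α : |α| ≤ d}`. -/
def idx (n d : ℕ) : Finset (Fin n → ℕ) :=
  (Fintype.piFinset fun _ => Finset.range (d + 1)).filter fun α => ∑ i, α i ≤ d

lemma mem_idx {n d : ℕ} {α : Fin n → ℕ} : α ∈ idx n d ↔ ∑ i, α i ≤ d := by
  simp only [idx, Finset.mem_filter, Fintype.mem_piFinset, Finset.mem_range, and_iff_right_iff_imp]
  intro h i
  have := Finset.single_le_sum (f := α) (fun _ _ => Nat.zero_le _) (Finset.mem_univ i)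
  omega

lemma prod_enum {n d : ℕ} {E : Fin (sdim n d) → (Fin n → ℕ)} (hE : IsEnum n d E)
    (F : (Fin n → ℕ) → ℝ) : ∏ i, F (E i) = ∏ α ∈ idx n d, F α := by
  have : idx n d = Finset.univ.map ⟨E, hE.1⟩ := by
    ext α
    rw [mem_idx, hE.2 α]
    simp
  rw [this, Finset.prod_map]
  rfl

lemma prod_idx (n d k q : ℕ) (hq : 0 < q) (hd : q * (k + n) ≤ d) (F : (Fin n → ℕ) → ℝ) :
    ∏ α ∈ (idx n d).filter (fun α => (fun i => α i / q) ∈ idx n k), F (fun i => α i / q)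
      = (∏ β ∈ idx n k, F β) ^ (q ^ n) := by
  have h1 : ∏ x ∈ idx n k ×ˢ (Fintype.piFinset fun _ : Fin n => Finset.range q), F x.1
      = (∏ β ∈ idx n k, F β) ^ (q ^ n) := by
    rw [Finset.prod_product, ← Finset.prod_pow]
    refine Finset.prod_congr rfl fun β _ => ?_
    simp
  rw [← h1]
  refine Finset.prod_bij' (fun α _ => (fun i => α i / q, fun i => α i % q))
    (fun x _ => fun i => q * x.1 i + x.2 i) ?_ ?_ ?_ ?_ ?_
  · intro α hα
    simp only [Finset.mem_product, Fintype.mem_piFinset, Finset.mem_range]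
    exact ⟨(Finset.mem_filter.1 hα).2, fun i => Nat.mod_lt _ hq⟩
  · rintro ⟨β, γ⟩ hx
    simp only [Finset.mem_product, Fintype.mem_piFinset, Finset.mem_range] at hx
    have hdiv : (fun i => (q * β i + γ i) / q) = β := by
      ext i
      rw [Nat.mul_add_div hq, Nat.div_eq_of_lt (hx.2 i), add_zero]
    simp only [Finset.mem_filter, hdiv]
    refine ⟨mem_idx.2 ?_, hx.1⟩
    rw [Finset.sum_add_distrib, ← Finset.mul_sum]
    have h2 : ∑ i, γ i ≤ ∑ _i : Fin n, q := Finset.sum_le_sum fun i _ => (hx.2 i).le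
    have h3 := Nat.mul_le_mul_left q (mem_idx.1 hx.1)
    simp at h2
    nlinarith
  · intro α _
    ext i
    exact Nat.div_add_mod _ _
  · rintro ⟨β, γ⟩ hx
    simp only [Finset.mem_product, Fintype.mem_piFinset, Finset.mem_range] at hx
    ext i
    · simp only
      rw [Nat.mul_add_div hq, Nat.div_eq_of_lt (hx.2 i), add_zero]
    · simp only
      rw [Nat.mul_add_mod, Nat.mod_eq_of_lt (hx.2 i)]
  · intro α _; rfl

lemma card_idx {n d : ℕ} {E : Fin (sdim n d) → (Fin n → ℕ)} (hE : IsEnum n d E) :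
    (idx n d).card = sdim n d := by
  have : idx n d = Finset.univ.map ⟨E, hE.1⟩ := by
    ext α
    rw [mem_idx, hE.2 α]
    simp
  rw [this]; simp

/-- Key submultiplicativity estimate for maximal Vandermonde determinants. -/
lemma key_submult {n : ℕ} {H : Set (Pt n)} [CompactSpace H] [Nonempty H] (W : H → ℝ)
    (hW : Continuous W) (R : ℝ) (hR : 0 < R)
    (hbd : ∀ e γ, ∑ i, γ i ≤ e → ∀ z : H, ‖wmon W e γ z‖ ≤ R ^ e)
    (E : ∀ d, Fin (sdim n d) → (Fin n → ℕ)) (hE : ∀ d, IsEnum n d (E d))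
    (hEs : ∀ d, StrictMono (fun i => toLex (E d i)))
    (V : ℕ → ℝ)
    (hV1 : ∀ d (a : Fin (sdim n d) → H),
      ‖Matrix.det (Matrix.of fun i j => wmon W d (E d i) (a j))‖ ≤ V d)
    (hV2 : ∀ d, ∃ a : Fin (sdim n d) → H,
      ‖Matrix.det (Matrix.of fun i j => wmon W d (E d i) (a j))‖ = V d)
    (d k q : ℕ) (hq : 0 < q) (hd : q * (k + n) ≤ d) :
    V d ≤ (sdim n d).factorial * R ^ (d * sdim n d) *
      (V k / R ^ (k * sdim n k)) ^ (q ^ (n + 1)) := by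
  have hspan : ∀ d i, Submodule.span ℂ ((fun i => wmon W d (E d i)) '' Set.Iio i)
      = lowSpan W d (E d i) := by
    intro d i
    unfold lowSpan
    congr 1
    ext g
    constructor
    · rintro ⟨j, hj, rfl⟩
      exact ⟨E d j, ⟨hEs d hj, ((hE d).2 _).2 ⟨j, rfl⟩⟩, rfl⟩
    · rintro ⟨β, ⟨h1, h2⟩, rfl⟩
      obtain ⟨j, rfl⟩ := ((hE d).2 _).1 h2
      exact ⟨j, (hEs d).lt_iff_lt.1 h1, rfl⟩
  obtain ⟨p0, N0, a, hp0, hN0, hprod⟩ := leja_aux (sdim n k) (fun i => wmon W k (E k i))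
    (fun i => wmon_continuous W hW _ _)
  obtain ⟨p, N, hpN, hNprod⟩ : ∃ (p : (Fin n → ℕ) → H → ℂ) (N : (Fin n → ℕ) → ℝ),
      (∀ β ∈ idx n k, IsMon W k β (p β) ∧ ∀ z, ‖p β z‖ ≤ N β) ∧ ∏ β ∈ idx n k, N β ≤ V k := by
    refine ⟨Function.extend (E k) p0 0, Function.extend (E k) N0 0, ?_, ?_⟩
    · intro β hβ
      obtain ⟨j, rfl⟩ := ((hE k).2 _).1 (mem_idx.1 hβ)
      rw [(hE k).1.extend_apply, (hE k).1.extend_apply]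
      refine ⟨?_, hN0 j⟩
      have := hp0 j
      rw [hspan k j] at this
      exact this
    · rw [← prod_enum (hE k)]
      simp only [(hE k).1.extend_apply]
      exact hprod.trans (hV1 k a)
  have hNnn : ∀ β ∈ idx n k, 0 ≤ N β := fun β hβ =>
    (norm_nonneg _).trans ((hpN β hβ).2 (Classical.arbitrary H))
  have hqk : q * k ≤ d := le_trans (Nat.mul_le_mul_left _ (Nat.le_add_right _ _)) hd
  classical
  let P : (Fin n → ℕ) → H → ℂ := fun α =>
    if (fun i => α i / q) ∈ idx n k then
      (p (fun i => α i / q)) ^ q * wmon W (d - q * k) (fun i => α i % q) else wmon W d α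
  let N' : (Fin n → ℕ) → ℝ := fun α =>
    if (fun i => α i / q) ∈ idx n k then
      (N (fun i => α i / q)) ^ q * R ^ (d - q * k) else R ^ d
  have hmod : ∀ α : Fin n → ℕ, ∑ i, α i % q ≤ d - q * k := by
    intro α
    have h2 : ∑ i, α i % q ≤ ∑ _i : Fin n, q :=
      Finset.sum_le_sum fun i _ => (Nat.mod_lt _ hq).le
    simp at h2
    rw [mul_add] at hd
    have := mul_comm n q
    omega
  have hP : ∀ α ∈ idx n d, IsMon W d α (P α) := by
    intro α hα
    by_cases h : (fun i => α i / q) ∈ idx n k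
    · simp only [P, if_pos h]
      have h1 := ((hpN _ h).1.pow (mem_idx.1 h) q).mul
        (IsMon.self W (d - q * k) (fun i => α i % q)) (by
          simp only [Pi.smul_apply, smul_eq_mul, ← Finset.mul_sum]
          exact Nat.mul_le_mul_left _ (mem_idx.1 h)) (hmod α)
      have h2 : (q • (fun i => α i / q) + fun i => α i % q) = α := by
        ext i
        simp [Nat.div_add_mod]
      rwa [h2, Nat.add_sub_cancel' hqk] at h1
    · simp only [P, if_neg h]
      exact IsMon.self _ _ _
  have hN' : ∀ α ∈ idx n d, ∀ z, ‖P α z‖ ≤ N' α := by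
    intro α hα z
    by_cases h : (fun i => α i / q) ∈ idx n k
    · simp only [P, N', if_pos h, Pi.mul_apply, Pi.pow_apply, norm_mul, norm_pow]
      have h1 := (hpN _ h).2 z
      have h2 := hbd (d - q * k) _ (hmod α) z
      have := hNnn _ h
      gcongr
    · simp only [P, N', if_neg h]
      exact hbd d α (mem_idx.1 hα) z
  obtain ⟨b, hb⟩ := hV2 d
  have hup := det_upper (sdim n d) (fun i => wmon W d (E d i)) (fun i => P (E d i))
    (fun i => N' (E d i)) (fun i => by
      rw [hspan]; exact hP _ (mem_idx.2 (((hE d).2 _).2 ⟨i, rfl⟩)))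
    (fun i z => hN' _ (mem_idx.2 (((hE d).2 _).2 ⟨i, rfl⟩)) z) b
  rw [hb] at hup
  refine hup.trans ?_
  rw [mul_assoc]
  refine mul_le_mul_of_nonneg_left ?_ (Nat.cast_nonneg _)
  rw [prod_enum (hE d)]
  have hN'eq : ∀ α, N' α = R ^ d * (if (fun i => α i / q) ∈ idx n k then
      (N (fun i => α i / q) / R ^ k) ^ q else 1) := by
    intro α
    by_cases h : (fun i => α i / q) ∈ idx n k
    · simp only [N', if_pos h]
      have : R ^ d = R ^ (d - q * k) * (R ^ k) ^ q := by
        rw [← pow_mul, ← pow_add, mul_comm k q, Nat.sub_add_cancel hqk]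
      rw [this, div_pow]
      have : (R ^ k) ^ q ≠ 0 := by positivity
      field_simp
    · simp only [N', if_neg h, mul_one]
  simp only [hN'eq]
  rw [Finset.prod_mul_distrib, Finset.prod_const, card_idx (hE d), ← pow_mul]
  refine mul_le_mul_of_nonneg_left ?_ (by positivity)
  rw [← Finset.prod_filter, prod_idx n d k q hq hd (fun β => (N β / R ^ k) ^ q)]
  rw [Finset.prod_pow, ← pow_mul, ← pow_succ']
  refine pow_le_pow_left₀ ?_ ?_ _
  · exact Finset.prod_nonneg fun β hβ => div_nonneg (hNnn β hβ) (by positivity)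
  · rw [Finset.prod_div_distrib, Finset.prod_const, card_idx (hE k), ← pow_mul]
    gcongr

/-! ### Asymptotics -/

lemma poly_root_tendsto (C : ℝ) (hC : 0 < C) (m : ℕ) (a : ℝ) :
    Tendsto (fun d : ℕ => (C * (d : ℝ) ^ m) ^ (a / (d : ℝ))) atTop (𝓝 1) := by
  have h1 : Tendsto (fun d : ℕ => (a * Real.log C) * (1 / (d : ℝ)) +
      (a * m) * (Real.log d / d)) atTop (𝓝 ((a * Real.log C) * 0 + (a * m) * 0)) := by
    refine (tendsto_one_div_atTop_nhds_zero_nat.const_mul _).add (Tendsto.const_mul _ ?_)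
    have := (Real.isLittleO_log_id_atTop.tendsto_div_nhds_zero).comp tendsto_natCast_atTop_atTop
    exact this
  have h2 := (Real.continuous_exp.tendsto _).comp h1
  simp only [mul_zero, add_zero, Real.exp_zero] at h2
  refine h2.congr' ?_
  filter_upwards [eventually_ge_atTop 1] with d hd
  have hd' : (0 : ℝ) < d := by exact_mod_cast hd
  rw [Real.rpow_def_of_pos (by positivity), Real.log_mul (by positivity) (by positivity),
    Real.log_pow]
  simp only [Function.comp]
  congr 1
  field_simp

lemma sdim_le (n d : ℕ) (hd : 1 ≤ d) : (sdim n d : ℝ) ≤ ((n : ℝ) + 1) ^ n * (d : ℝ) ^ n := by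
  have h1 : sdim n d ≤ (d + n) ^ n := Nat.choose_le_pow _ _
  have h2 : d + n ≤ (n + 1) * d := by nlinarith
  have h3 : sdim n d ≤ ((n + 1) * d) ^ n := h1.trans (Nat.pow_le_pow_left h2 n)
  rw [← mul_pow]
  exact_mod_cast h3

lemma fact_root_le (n d : ℕ) (hd : 1 ≤ d) :
    ((sdim n d).factorial : ℝ) ^ (1 / (d * sdim n d) : ℝ) ≤
      (((n : ℝ) + 1) ^ n * (d : ℝ) ^ n) ^ (1 / (d : ℝ)) := by
  have hs : (0 : ℝ) < sdim n d := by exact_mod_cast sdim_pos n d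
  have hd' : (0 : ℝ) < d := by exact_mod_cast hd
  have h1 : ((sdim n d).factorial : ℝ) ≤ (sdim n d : ℝ) ^ (sdim n d : ℝ) := by
    rw [Real.rpow_natCast]
    exact_mod_cast Nat.factorial_le_pow _
  calc ((sdim n d).factorial : ℝ) ^ (1 / (d * sdim n d) : ℝ)
      ≤ ((sdim n d : ℝ) ^ (sdim n d : ℝ)) ^ (1 / (d * sdim n d) : ℝ) :=
        Real.rpow_le_rpow (by positivity) h1 (by positivity)
    _ = (sdim n d : ℝ) ^ (1 / (d : ℝ)) := by
        rw [← Real.rpow_mul hs.le]; congr 1; field_simp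
    _ ≤ _ := Real.rpow_le_rpow hs.le (sdim_le n d hd) (by positivity)

lemma expo_lower (n d k : ℕ) (hk : 1 ≤ k) (hd : k + n ≤ d) :
    ((k : ℝ) * (1 / ((k : ℝ) + n) - 1 / d)) ^ (n + 1) / (1 + (n : ℝ) * (1 / d)) ^ n ≤
    (k * sdim n k : ℝ) * ((d / (k + n) : ℕ) : ℝ) ^ (n + 1) / (d * sdim n d) := by
  have hk' : (0 : ℝ) < k := by exact_mod_cast hk
  have hd' : (0 : ℝ) < d := by exact_mod_cast (by omega : 0 < d)
  have hs : (0 : ℝ) < sdim n d := by exact_mod_cast sdim_pos n d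
  have hkn : (0 : ℝ) < (k : ℝ) + n := by positivity
  have hf : (0 : ℝ) < n.factorial := by exact_mod_cast Nat.factorial_pos n
  have hsk : (k : ℝ) ^ n ≤ n.factorial * sdim n k := by
    have h := Nat.pow_le_choose (α := ℝ) n (k + n)
    unfold sdim
    have h2 : (k : ℝ) ^ n ≤ ((k + n + 1 - n : ℕ) : ℝ) ^ n := by
      refine pow_le_pow_left₀ hk'.le ?_ _
      exact_mod_cast (by omega)
    rw [div_le_iff₀ hf] at h
    refine h2.trans (le_trans ?_ (h.trans_eq (mul_comm _ _)))
    push_cast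
    exact le_rfl
  have hsd : n.factorial * (sdim n d : ℝ) ≤ ((d : ℝ) + n) ^ n := by
    have h := Nat.choose_le_pow_div (α := ℝ) n (d + n)
    rw [le_div_iff₀ hf] at h
    unfold sdim
    push_cast at h
    rw [mul_comm]; exact h
  have hq : (d : ℝ) / (k + n) - 1 ≤ ((d / (k + n) : ℕ) : ℝ) := by
    have h := Nat.lt_div_mul_add (a := d) (b := k + n) (by omega)
    have h' : (d : ℝ) ≤ ((d / (k + n) : ℕ) : ℝ) * (k + n) + (k + n) := by exact_mod_cast h.le
    rw [sub_le_iff_le_add, div_le_iff₀ hkn]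
    linarith
  have hq0 : 0 ≤ (d : ℝ) / (k + n) - 1 := by
    rw [sub_nonneg, le_div_iff₀ hkn]
    have : ((k + n : ℕ) : ℝ) ≤ d := by exact_mod_cast hd
    push_cast at this; linarith
  set Q : ℝ := ((d / (k + n) : ℕ) : ℝ)
  have e1 : ((k : ℝ) * (1 / ((k : ℝ) + n) - 1 / d)) ^ (n + 1) / (1 + (n : ℝ) * (1 / d)) ^ n
      = (k * (k : ℝ) ^ n) * ((d : ℝ) / (k + n) - 1) ^ (n + 1) / (d * ((d : ℝ) + n) ^ n) := by
    have h1 : (1 / ((k : ℝ) + n) - 1 / d) = ((d : ℝ) / (k + n) - 1) / d := by field_simp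
    have h2 : (1 + (n : ℝ) * (1 / d)) = ((d : ℝ) + n) / d := by field_simp
    rw [h1, h2, mul_pow, div_pow, div_pow]
    field_simp
    ring
  rw [e1]
  calc (k * (k : ℝ) ^ n) * ((d : ℝ) / (k + n) - 1) ^ (n + 1) / (d * ((d : ℝ) + n) ^ n)
      ≤ (k * (n.factorial * sdim n k)) * Q ^ (n + 1) / (d * (n.factorial * sdim n d)) := by
        gcongr
    _ = _ := by field_simp

lemma expo_event (n : ℕ) (θ : ℝ) (hθ : θ < 1) :
    ∃ K : ℕ, ∀ k ≥ K, ∀ᶠ d : ℕ in atTop,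
      θ ≤ (k * sdim n k : ℝ) * ((d / (k + n) : ℕ) : ℝ) ^ (n + 1) / (d * sdim n d) := by
  have h1 : Tendsto (fun k : ℕ => ((k : ℝ) * (1 / ((k : ℝ) + n))) ^ (n + 1)) atTop (𝓝 1) := by
    have : Tendsto (fun k : ℕ => (k : ℝ) * (1 / ((k : ℝ) + n))) atTop (𝓝 1) := by
      have := tendsto_natCast_div_add_atTop (𝕜 := ℝ) (n : ℝ)
      simpa [div_eq_mul_inv] using this
    simpa using this.pow (n + 1)
  obtain ⟨K, hK⟩ := eventually_atTop.1 (h1.eventually_const_lt hθ)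
  refine ⟨max K 1, fun k hk => ?_⟩
  have hkK := hK k ((le_max_left _ _).trans hk)
  have hk1 : 1 ≤ k := (le_max_right _ _).trans hk
  have h2 : Tendsto (fun d : ℕ => ((k : ℝ) * (1 / ((k : ℝ) + n) - 1 / (d : ℝ))) ^ (n + 1) /
      (1 + (n : ℝ) * (1 / (d : ℝ))) ^ n) atTop
      (𝓝 (((k : ℝ) * (1 / ((k : ℝ) + n) - 0)) ^ (n + 1) / (1 + (n : ℝ) * 0) ^ n)) := by
    have h0 := tendsto_one_div_atTop_nhds_zero_nat (𝕜 := ℝ)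
    refine Tendsto.div ?_ ?_ (by simp)
    · exact (((tendsto_const_nhds.sub h0).const_mul _).pow _)
    · exact ((tendsto_const_nhds.add (h0.const_mul _)).pow _)
  simp only [sub_zero, mul_zero, add_zero, one_pow, div_one] at h2
  filter_upwards [h2.eventually_const_lt hkK, eventually_ge_atTop (k + n)] with d hd hd2
  exact hd.le.trans (expo_lower n d k hk1 hd2)

lemma limit_aux (n : ℕ) (y : ℕ → ℝ) (hy0 : ∀ d, 0 ≤ y d)
    (hy1 : ∀ d, y d ≤ (sdim n d).factorial)
    (hy2 : ∀ d k q, 0 < q → q * (k + n) ≤ d →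
      y d ≤ (sdim n d).factorial * (y k) ^ (q ^ (n + 1)))
    (t t' : ℝ) (ht : 0 < t) (htt' : t < t')
    (hfreq : ∃ᶠ k in atTop, (y k) ^ (1 / (k * sdim n k) : ℝ) < t) :
    ∀ᶠ d in atTop, (y d) ^ (1 / (d * sdim n d) : ℝ) < t' := by
  have hc := poly_root_tendsto (((n : ℝ) + 1) ^ n) (by positivity) n 1
  rcases le_or_gt 1 t with h1 | h1
  · filter_upwards [hc.eventually_lt_const (h1.trans_lt htt'), eventually_ge_atTop 1]
      with d hd hd1
    refine lt_of_le_of_lt ?_ hd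
    exact (Real.rpow_le_rpow (hy0 d) (hy1 d) (by positivity)).trans (fact_root_le n d hd1)
  · obtain ⟨θ, hθ1, hθ⟩ : ∃ θ : ℝ, t ^ θ < t' ∧ θ < 1 := by
      have hcont : Tendsto (fun θ : ℝ => t ^ θ) (𝓝[<] 1) (𝓝 (t ^ (1 : ℝ))) :=
        ((Real.continuous_const_rpow ht.ne').tendsto 1).mono_left nhdsWithin_le_nhds
      rw [Real.rpow_one] at hcont
      exact ((hcont.eventually_lt_const htt').and self_mem_nhdsWithin).exists
    obtain ⟨K, hK⟩ := expo_event n θ hθ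
    obtain ⟨k, hkt, hkK⟩ := (hfreq.and_eventually (eventually_ge_atTop (max K 1))).exists
    have hk1 : 1 ≤ k := (le_max_right _ _).trans hkK
    have hlim := hc.mul_const (t ^ θ)
    rw [one_mul] at hlim
    filter_upwards [hK k ((le_max_left _ _).trans hkK), hlim.eventually_lt_const hθ1,
      eventually_ge_atTop (k + n)] with d he hd hdk
    refine lt_of_le_of_lt ?_ hd
    have hd1 : 1 ≤ d := by omega
    have hq : 0 < d / (k + n) := Nat.div_pos hdk (by omega)
    have hmain := hy2 d k (d / (k + n)) hq (Nat.div_mul_le_self _ _)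
    have hs : (0 : ℝ) < sdim n d := by exact_mod_cast sdim_pos n d
    have hsk : (0 : ℝ) < sdim n k := by exact_mod_cast sdim_pos n k
    have hd' : (0 : ℝ) < d := by exact_mod_cast hd1
    have hk' : (0 : ℝ) < k := by exact_mod_cast hk1
    set u := (y k) ^ (1 / (k * sdim n k) : ℝ) with hu
    have hu0 : 0 ≤ u := Real.rpow_nonneg (hy0 k) _
    have hyu : y k = u ^ (k * sdim n k : ℝ) := by
      rw [hu, ← Real.rpow_mul (hy0 k), one_div, inv_mul_cancel₀ (by positivity), Real.rpow_one]
    calc (y d) ^ (1 / (d * sdim n d) : ℝ)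
        ≤ ((sdim n d).factorial * (y k) ^ ((d / (k + n)) ^ (n + 1))) ^
            (1 / (d * sdim n d) : ℝ) := Real.rpow_le_rpow (hy0 d) hmain (by positivity)
      _ = ((sdim n d).factorial : ℝ) ^ (1 / (d * sdim n d) : ℝ) *
          ((y k) ^ ((d / (k + n)) ^ (n + 1))) ^ (1 / (d * sdim n d) : ℝ) :=
          Real.mul_rpow (by positivity) (pow_nonneg (hy0 k) _)
      _ ≤ (((n : ℝ) + 1) ^ n * (d : ℝ) ^ n) ^ (1 / (d : ℝ)) * t ^ θ := by
          refine mul_le_mul (fact_root_le n d hd1) ?_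
            (Real.rpow_nonneg (pow_nonneg (hy0 k) _) _) (by positivity)
          rw [← Real.rpow_natCast, hyu, ← Real.rpow_mul hu0, ← Real.rpow_mul hu0]
          have hexp : (k * sdim n k : ℝ) * (((d / (k + n)) ^ (n + 1) : ℕ) : ℝ) *
              (1 / (d * sdim n d) : ℝ) =
              (k * sdim n k : ℝ) * ((d / (k + n) : ℕ) : ℝ) ^ (n + 1) / (d * sdim n d) := by
            rw [mul_one_div, Nat.cast_pow]
          rw [hexp]
          refine le_trans (Real.rpow_le_rpow hu0 hkt.le (by positivity)) ?_
          exact Real.rpow_le_rpow_of_exponent_ge ht h1.le he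

/-! ### Markov estimates -/

/-- `f` is given by a pair of real polynomials of degree at most `D`. -/
def RP {n : ℕ} (D : ℕ) (f : Pt n → ℂ) : Prop :=
  ∃ p q : MvPolynomial ((Fin n) ⊕ (Fin n)) ℝ, p.totalDegree ≤ D ∧ q.totalDegree ≤ D ∧
    ∀ z, f z = (MvPolynomial.eval (realCoords z) p : ℂ) +
      (MvPolynomial.eval (realCoords z) q : ℂ) * Complex.I

lemma RP.mono {n : ℕ} {D D' : ℕ} {f : Pt n → ℂ} (h : RP D f) (hD : D ≤ D') : RP D' f := by
  obtain ⟨p, q, hp, hq, h⟩ := h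
  exact ⟨p, q, hp.trans hD, hq.trans hD, h⟩

lemma RP.const {n : ℕ} (c : ℂ) : RP (n := n) 0 (fun _ => c) :=
  ⟨MvPolynomial.C c.re, MvPolynomial.C c.im, by simp, by simp, fun z => by simp⟩

lemma RP.real {n : ℕ} (p : MvPolynomial ((Fin n) ⊕ (Fin n)) ℝ) :
    RP (n := n) p.totalDegree (fun z => ((MvPolynomial.eval (realCoords z) p : ℝ) : ℂ)) :=
  ⟨p, 0, le_rfl, by simp, fun z => by simp⟩

lemma RP.coord {n : ℕ} (k : Fin n) : RP (n := n) 1 (fun z => z k) :=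
  ⟨MvPolynomial.X (Sum.inl k), MvPolynomial.X (Sum.inr k), by simp, by simp,
    fun z => by simp [realCoords]⟩

lemma RP.add {n : ℕ} {D : ℕ} {f g : Pt n → ℂ} (hf : RP D f) (hg : RP D g) :
    RP D (fun z => f z + g z) := by
  obtain ⟨p, q, hp, hq, h⟩ := hf
  obtain ⟨p', q', hp', hq', h'⟩ := hg
  refine ⟨p + p', q + q', (MvPolynomial.totalDegree_add _ _).trans (max_le hp hp'),
    (MvPolynomial.totalDegree_add _ _).trans (max_le hq hq'), fun z => ?_⟩
  simp only [h, h', map_add, Complex.ofReal_add]; ring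

lemma RP.mul {n : ℕ} {D D' : ℕ} {f g : Pt n → ℂ} (hf : RP D f) (hg : RP D' g) :
    RP (D + D') (fun z => f z * g z) := by
  obtain ⟨p, q, hp, hq, h⟩ := hf
  obtain ⟨p', q', hp', hq', h'⟩ := hg
  have hm : ∀ a b : MvPolynomial ((Fin n) ⊕ (Fin n)) ℝ, a.totalDegree ≤ D →
      b.totalDegree ≤ D' → (a * b).totalDegree ≤ D + D' := fun a b ha hb =>
    (MvPolynomial.totalDegree_mul _ _).trans (add_le_add ha hb)
  refine ⟨p * p' - q * q', p * q' + q * p',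
    (MvPolynomial.totalDegree_sub _ _).trans (max_le (hm _ _ hp hp') (hm _ _ hq hq')),
    (MvPolynomial.totalDegree_add _ _).trans (max_le (hm _ _ hp hq') (hm _ _ hq hp')),
    fun z => ?_⟩
  simp only [h, h', map_add, map_sub, map_mul, Complex.ofReal_add, Complex.ofReal_sub, Complex.ofReal_mul]
  linear_combination (((MvPolynomial.eval (realCoords z) q : ℝ) : ℂ) *
    ((MvPolynomial.eval (realCoords z) q' : ℝ) : ℂ)) * Complex.I_mul_I

lemma RP.pow {n : ℕ} {D : ℕ} {f : Pt n → ℂ} (hf : RP D f) (m : ℕ) :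
    RP (m * D) (fun z => f z ^ m) := by
  induction m with
  | zero => simpa using RP.const (n := n) 1
  | succ m ih =>
    simp only [pow_succ, add_mul, one_mul]
    exact ih.mul hf

lemma RP.sum {n : ℕ} {ι : Type*} (s : Finset ι) {D : ℕ} {f : ι → Pt n → ℂ}
    (hf : ∀ i, RP D (f i)) : RP D (fun z => ∑ i ∈ s, f i z) := by
  classical
  induction s using Finset.induction_on with
  | empty => simpa using (RP.const (n := n) 0).mono (Nat.zero_le D)
  | insert i s hi ih =>
    simp only [Finset.sum_insert hi]
    exact (hf i).add ih

lemma RP.prod {n : ℕ} {ι : Type*} (s : Finset ι) {D : ι → ℕ} {f : ι → Pt n → ℂ}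
    (hf : ∀ i, RP (D i) (f i)) : RP (∑ i ∈ s, D i) (fun z => ∏ i ∈ s, f i z) := by
  classical
  induction s using Finset.induction_on with
  | empty => simpa using (RP.const (n := n) 1)
  | insert i s hi ih =>
    simp only [Finset.sum_insert hi, Finset.prod_insert hi]
    exact (hf i).mul ih

lemma RP.markov {n : ℕ} {H : Set (Pt n)} {M : ℝ} (hM : 0 < M) (hML : MarkovLip n H M)
    {D : ℕ} {f : Pt n → ℂ} (hf : RP D f) {S : ℝ} (hS : ∀ z ∈ H, ‖f z‖ ≤ S)
    {x y : Pt n} (hx : x ∈ H) (hy : y ∈ H) :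
    ‖f x - f y‖ ≤ 2 * M * (D : ℝ) ^ 2 * S * dist x y := by
  obtain ⟨p, q, hp, hq, h⟩ := hf
  have hS0 : 0 ≤ S := (norm_nonneg _).trans (hS x hx)
  have key : ∀ r : MvPolynomial ((Fin n) ⊕ (Fin n)) ℝ, r.totalDegree ≤ D →
      (∀ z ∈ H, |MvPolynomial.eval (realCoords z) r| ≤ ‖f z‖) →
      |MvPolynomial.eval (realCoords x) r - MvPolynomial.eval (realCoords y) r|
        ≤ M * (D : ℝ) ^ 2 * S * dist x y := by
    intro r hr hrb
    refine (hML r x hx y hy).trans ?_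
    have h1 : sSup ((fun z : Pt n => |MvPolynomial.eval (realCoords z) r|) '' H) ≤ S := by
      refine csSup_le ⟨_, ⟨x, hx, rfl⟩⟩ ?_
      rintro _ ⟨z, hz, rfl⟩
      exact (hrb z hz).trans (hS z hz)
    have h2 : 0 ≤ sSup ((fun z : Pt n => |MvPolynomial.eval (realCoords z) r|) '' H) := by
      refine Real.sSup_nonneg ?_
      rintro _ ⟨z, hz, rfl⟩
      exact abs_nonneg _
    gcongr
  have hp' := key p hp fun z hz => by
    have := Complex.abs_re_le_norm (f z)
    rw [h z] at this ⊢
    simpa using this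
  have hq' := key q hq fun z hz => by
    have := Complex.abs_im_le_norm (f z)
    rw [h z] at this ⊢
    simpa using this
  have h2 := Complex.norm_le_abs_re_add_abs_im (f x - f y)
  rw [h x, h y] at h2 ⊢
  simp at h2
  linarith

lemma det_perturb {n : ℕ} {H : Set (Pt n)} {M : ℝ} (hM : 0 < M) (hML : MarkovLip n H M)
    (D : ℕ) {s : ℕ} (Φ : Fin s → Pt n → ℂ) (hΦ : ∀ i, RP D (Φ i)) (V : ℝ)
    (hV : ∀ a : Fin s → H, ‖Matrix.det (Matrix.of fun i j => Φ i (a j))‖ ≤ V)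
    (a A : Fin s → H) (r : ℝ) (hr : ∀ j, dist (a j) (A j) ≤ r) :
    ‖Matrix.det (Matrix.of fun i j => Φ i (a j)) - Matrix.det (Matrix.of fun i j => Φ i (A j))‖
      ≤ s * (2 * M * (D : ℝ) ^ 2 * V * r) := by
  classical
  have hV0 : 0 ≤ V := (norm_nonneg _).trans (hV A)
  have one : ∀ (b : Fin s → H) (j : Fin s) (x y : H), dist x y ≤ r →
      ‖Matrix.det (Matrix.of fun i j' => Φ i (Function.update b j x j')) -
        Matrix.det (Matrix.of fun i j' => Φ i (Function.update b j y j'))‖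
        ≤ 2 * M * (D : ℝ) ^ 2 * V * r := by
    intro b j x y hxy
    let B : Matrix (Fin s) (Fin s) ℂ := Matrix.of fun i j' => Φ i (b j')
    have hB : ∀ x : H, Matrix.det (Matrix.of fun i j' => Φ i (Function.update b j x j')) =
        ∑ i, Φ i x * B.cramer (Pi.single i 1) j := by
      intro x
      have h1 : (Matrix.of fun i j' => Φ i (Function.update b j x j')) =
          B.updateCol j (fun i => Φ i x) := by
        ext i j'
        by_cases h : j' = j
        · subst h; simp
        · simp [h, B]
      rw [h1, ← Matrix.cramer_apply, LinearMap.pi_apply_eq_sum_univ]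
      rw [Finset.sum_apply]
      refine Finset.sum_congr rfl fun i _ => ?_
      have h2 : (fun k => if i = k then (1 : ℂ) else 0) = Pi.single i 1 := by
        ext k
        simp [Pi.single_apply, eq_comm]
      rw [h2]
      simp
    have hRP : RP (n := n) D (fun z => ∑ i, Φ i z * B.cramer (Pi.single i 1) j) := by
      refine RP.sum _ fun i => ?_
      simpa using (hΦ i).mul (RP.const (n := n) (B.cramer (Pi.single i 1) j))
    rw [hB, hB]
    refine (hRP.markov hM hML (S := V) (fun z hz => ?_) x.2 y.2).trans ?_
    · have := hV (Function.update b j ⟨z, hz⟩)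
      rwa [hB] at this
    · have : dist (x : Pt n) y ≤ r := hxy
      gcongr
  have main : ∀ S : Finset (Fin s),
      ‖Matrix.det (Matrix.of fun i j => Φ i ((if j ∈ S then a j else A j : H))) -
        Matrix.det (Matrix.of fun i j => Φ i (A j))‖
      ≤ S.card * (2 * M * (D : ℝ) ^ 2 * V * r) := by
    intro S
    induction S using Finset.induction_on with
    | empty => simp
    | insert j S hj ih =>
      have h1 := one (fun j => if j ∈ S then a j else A j) j (a j) (A j) (hr j)
      have e1 : Function.update (fun j => if j ∈ S then a j else A j) j (a j) =
          fun j' => if j' ∈ insert j S then a j' else A j' := by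
        ext1 j'
        by_cases h : j' = j
        · subst h; simp
        · simp [h]
      have e2 : Function.update (fun j => if j ∈ S then a j else A j) j (A j) =
          fun j' => if j' ∈ S then a j' else A j' := by
        ext1 j'
        by_cases h : j' = j
        · subst h; simp [hj]
        · simp [h]
      rw [e1, e2] at h1
      rw [Finset.card_insert_of_notMem hj]
      have h2 := norm_sub_le_norm_sub_add_norm_sub
        (Matrix.det (Matrix.of fun i j' => Φ i ((if j' ∈ insert j S then a j' else A j' : H))))
        (Matrix.det (Matrix.of fun i j => Φ i ((if j ∈ S then a j else A j : H))))
        (Matrix.det (Matrix.of fun i j => Φ i (A j)))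
      push_cast
      linarith
  simpa using main Finset.univ

/-! ### Empirical measures -/

lemma emp_integral {X : Type*} [MeasurableSpace X] [TopologicalSpace X] [OpensMeasurableSpace X]
    {s : ℕ} (hs : s ≠ 0) (a : Fin s → X) (f : BoundedContinuousFunction X ℝ) :
    ∫ x, f x ∂(empPM hs a : Measure X) = (s : ℝ)⁻¹ * ∑ j, f (a j) := by
  change ∫ x, f x ∂(emp a) = _
  have hm : StronglyMeasurable f := f.continuous.stronglyMeasurable
  rw [emp, integral_smul_measure, integral_finsetSum_measure]
  · simp [integral_dirac' _ _ hm]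
  · intro i _
    have := BoundedContinuousFunction.integrable (Measure.dirac (a i)) f
    exact this

lemma emp_close {n : ℕ} {H : Set (Pt n)} [CompactSpace H] (A : ∀ d : ℕ, Fin (sdim n d) → H)
    (μ : ProbabilityMeasure H)
    (hconv : Tendsto (fun d => empPM (sdim_pos n d).ne' (A d)) atTop (𝓝 μ))
    (r : ℕ → ℝ) (hr : Tendsto r atTop (𝓝 0))
    (G : Set (ProbabilityMeasure H)) (hG : IsOpen G) (hμ : μ ∈ G) :
    ∀ᶠ d in atTop, ∀ a : Fin (sdim n d) → H, (∀ j, dist (a j) (A d j) < r d) →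
      a ∈ Gtilde d H G := by
  classical
  by_contra hcon
  let b : ∀ d : ℕ, Fin (sdim n d) → H := fun d =>
    if h : ∃ a : Fin (sdim n d) → H, (∀ j, dist (a j) (A d j) < r d) ∧ a ∉ Gtilde d H G then
      h.choose else A d
  have hb : ∀ d j, dist (b d j) (A d j) ≤ |r d| := by
    intro d j
    by_cases h : ∃ a : Fin (sdim n d) → H, (∀ j, dist (a j) (A d j) < r d) ∧ a ∉ Gtilde d H G
    · simp only [b, dif_pos h]
      exact (h.choose_spec.1 j).le.trans (le_abs_self _)
    · simp only [b, dif_neg h, dist_self]; positivity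
  have hbt : Tendsto (fun d => empPM (sdim_pos n d).ne' (b d)) atTop (𝓝 μ) := by
    rw [ProbabilityMeasure.tendsto_iff_forall_integral_tendsto] at hconv ⊢
    intro f
    have h1 := hconv f
    have h2 : Tendsto (fun d => ∫ x, f x ∂(empPM (sdim_pos n d).ne' (b d) : Measure H) -
        ∫ x, f x ∂(empPM (sdim_pos n d).ne' (A d) : Measure H)) atTop (𝓝 0) := by
      rw [Metric.tendsto_atTop]
      intro ε hε
      have huc := CompactSpace.uniformContinuous_of_continuous f.continuous
      obtain ⟨δ, hδ, hδ'⟩ := Metric.uniformContinuous_iff.1 huc (ε / 2) (by positivity)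
      have hr' : ∀ᶠ d in atTop, |r d| < δ := by
        have := hr.abs
        rw [abs_zero] at this
        exact this.eventually_lt_const hδ
      obtain ⟨N, hN⟩ := eventually_atTop.1 hr'
      refine ⟨N, fun d hd => ?_⟩
      rw [emp_integral, emp_integral, dist_zero_right, ← mul_sub, ← Finset.sum_sub_distrib,
        norm_mul]
      have hs : (0 : ℝ) < sdim n d := by exact_mod_cast sdim_pos n d
      have h3 : ‖∑ j, (f (b d j) - f (A d j))‖ ≤ sdim n d * (ε / 2) := by
        refine (norm_sum_le _ _).trans ?_
        refine (Finset.sum_le_sum (g := fun _ => ε / 2) fun j _ => ?_).trans (by simp)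
        have := hδ' ((hb d j).trans_lt (hN d hd))
        rw [Real.dist_eq] at this
        exact this.le
      rw [norm_inv, Real.norm_of_nonneg hs.le, inv_mul_lt_iff₀ hs]
      nlinarith
    have h4 := h1.add h2
    simpa using h4
  have hev := hbt.eventually (hG.mem_nhds hμ)
  refine hcon (hev.mono fun d hd a ha => ?_)
  by_contra hna
  have h : ∃ a : Fin (sdim n d) → H, (∀ j, dist (a j) (A d j) < r d) ∧ a ∉ Gtilde d H G :=
    ⟨a, ha, hna⟩
  have : b d ∉ Gtilde d H G := by
    simp only [b, dif_pos h]
    exact h.choose_spec.2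
  exact this hd

/-! ### Assembly -/

/-- The weight `w` restricted to `H`. -/
def wt {n : ℕ} (H : Set (Pt n)) (w : MvPolynomial ((Fin n) ⊕ (Fin n)) ℝ) : H → ℝ :=
  fun z => MvPolynomial.eval (realCoords (z : Pt n)) w

lemma continuous_eval_realCoords {n : ℕ} (w : MvPolynomial ((Fin n) ⊕ (Fin n)) ℝ) :
    Continuous fun z : Pt n => MvPolynomial.eval (realCoords z) w := by
  refine (MvPolynomial.continuous_eval w).comp (continuous_pi fun i => ?_)
  rcases i with j | j
  · simp only [realCoords, Sum.elim_inl]; fun_prop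
  · simp only [realCoords, Sum.elim_inr]; fun_prop

lemma absVDMQ_eq {n : ℕ} (d : ℕ) (E : Fin (sdim n d) → (Fin n → ℕ)) (H : Set (Pt n))
    (w : MvPolynomial ((Fin n) ⊕ (Fin n)) ℝ)
    (hwpos : ∀ z ∈ H, 0 < MvPolynomial.eval (realCoords z) w)
    (Q : H → ℝ) (hQ : ∀ z : H, Q z = -Real.log (MvPolynomial.eval (realCoords (z : Pt n)) w))
    (a : Fin (sdim n d) → H) :
    absVDMQ n d E H Q a =
      ENNReal.ofReal ‖Matrix.det (Matrix.of fun i j => wmon (wt H w) d (E i) (a j))‖ := by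
  have h1 : ∀ z : H, Real.exp (-(d : ℝ) * Q z) = (wt H w z) ^ d := by
    intro z
    rw [hQ, neg_mul_neg, mul_comm, Real.exp_mul, Real.exp_log (hwpos z z.2), Real.rpow_natCast]
    rfl
  have h2 := Matrix.det_mul_row (fun j => ((wt H w (a j) : ℝ) : ℂ) ^ d)
    (Matrix.of fun i j => ∏ k, ((a j : Pt n) k) ^ (E i k))
  have h3 : (Matrix.of fun i j => wmon (wt H w) d (E i) (a j)) =
      Matrix.of fun i j => (((wt H w (a j) : ℝ) : ℂ) ^ d) *
        (Matrix.of fun i j => ∏ k, ((a j : Pt n) k) ^ (E i k)) i j := by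
    ext i j
    simp [wmon, mul_comm]
  rw [h3, h2, norm_mul, norm_prod, absVDMQ, VDM, mul_comm]
  congr 2
  refine Finset.prod_congr rfl fun j _ => ?_
  have h4 : 0 ≤ wt H w (a j) := (hwpos _ (a j).2).le
  rw [h1, norm_pow, Complex.norm_real, Real.norm_of_nonneg h4]

lemma wmon_bound {n : ℕ} {H : Set (Pt n)} (hH : IsCompact H)
    (w : MvPolynomial ((Fin n) ⊕ (Fin n)) ℝ) :
    ∃ R : ℝ, 0 < R ∧ ∀ e (γ : Fin n → ℕ), ∑ i, γ i ≤ e → ∀ z : H,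
      ‖wmon (wt H w) e γ z‖ ≤ R ^ e := by
  obtain ⟨B1, hB1⟩ := hH.exists_bound_of_continuousOn (f := fun z => z) continuousOn_id
  obtain ⟨B2, hB2⟩ := hH.exists_bound_of_continuousOn (continuous_eval_realCoords w).continuousOn
  refine ⟨max B1 1 * max B2 1, by positivity, fun e γ hγ z => ?_⟩
  rw [wmon, norm_mul, norm_prod, mul_pow]
  have h1 : ∏ k, ‖((z : Pt n) k) ^ (γ k)‖ ≤ (max B1 1) ^ e := by
    calc ∏ k, ‖((z : Pt n) k) ^ (γ k)‖ ≤ ∏ k, (max B1 1) ^ (γ k) := by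
          refine Finset.prod_le_prod (fun _ _ => norm_nonneg _) fun k _ => ?_
          rw [norm_pow]
          refine pow_le_pow_left₀ (norm_nonneg _) ?_ _
          exact ((PiLp.norm_apply_le (z : Pt n) k).trans (hB1 z z.2)).trans (le_max_left _ _)
      _ = (max B1 1) ^ (∑ k, γ k) := Finset.prod_pow_eq_pow_sum _ _ _
      _ ≤ _ := pow_le_pow_right₀ (le_max_right _ _) hγ
  have h2 : ‖((wt H w z : ℝ) : ℂ) ^ e‖ ≤ (max B2 1) ^ e := by
    rw [norm_pow, Complex.norm_real]
    exact pow_le_pow_left₀ (norm_nonneg _) ((hB2 z z.2).trans (le_max_left _ _)) _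
  gcongr

lemma wmon_RP {n : ℕ} (w : MvPolynomial ((Fin n) ⊕ (Fin n)) ℝ) (d : ℕ) (α : Fin n → ℕ)
    (hα : ∑ i, α i ≤ d) :
    RP (n := n) (d * (1 + w.totalDegree)) (fun z => (∏ k, (z k) ^ (α k)) *
      ((MvPolynomial.eval (realCoords z) w : ℝ) : ℂ) ^ d) := by
  have h1 := RP.prod (n := n) Finset.univ (D := fun k => α k * 1)
    (f := fun k z => (z k) ^ (α k)) (fun k => (RP.coord k).pow (α k))
  have h2 := h1.mul ((RP.real w).pow d)
  refine h2.mono ?_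
  simp only [mul_one, mul_add]
  omega

/-- Existence of the limit, in a convenient form. -/
lemma limit_main {n : ℕ} {H : Set (Pt n)} [CompactSpace H] [Nonempty H] (W : H → ℝ)
    (hW : Continuous W) (R : ℝ) (hR : 0 < R)
    (hbd : ∀ e γ, ∑ i, γ i ≤ e → ∀ z : H, ‖wmon W e γ z‖ ≤ R ^ e)
    (E : ∀ d, Fin (sdim n d) → (Fin n → ℕ)) (hE : ∀ d, IsEnum n d (E d))
    (A : ∀ d, Fin (sdim n d) → H) (V : ℕ → ℝ)
    (hV1 : ∀ d (a : Fin (sdim n d) → H),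
      ‖Matrix.det (Matrix.of fun i j => wmon W d (E d i) (a j))‖ ≤ V d)
    (hV2 : ∀ d, ‖Matrix.det (Matrix.of fun i j => wmon W d (E d i) (A d j))‖ = V d)
    (t t' : ℝ) (ht : 0 < t) (htt' : t < t')
    (hfreq : ∃ᶠ k in atTop, (V k) ^ (1 / (k * sdim n k) : ℝ) < t) :
    ∀ᶠ d in atTop, (V d) ^ (1 / (d * sdim n d) : ℝ) < t' := by
  let σ : ∀ d, Equiv.Perm (Fin (sdim n d)) := fun d => Tuple.sort (fun i => toLex (E d i))
  let E' : ∀ d, Fin (sdim n d) → (Fin n → ℕ) := fun d i => E d (σ d i)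
  have hE' : ∀ d, IsEnum n d (E' d) := by
    intro d
    refine ⟨(hE d).1.comp (σ d).injective, fun α => ?_⟩
    rw [(hE d).2 α]
    have : Set.range (E' d) = Set.range (E d) := (σ d).surjective.range_comp (E d)
    rw [this]
  have hEs : ∀ d, StrictMono (fun i => toLex (E' d i)) := by
    intro d
    have hm : Monotone ((fun i => toLex (E d i)) ∘ σ d) := Tuple.monotone_sort _
    exact hm.strictMono_of_injective (toLex.injective.comp (hE' d).1)
  have hdet : ∀ d (a : Fin (sdim n d) → H),
      ‖Matrix.det (Matrix.of fun i j => wmon W d (E' d i) (a j))‖ =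
      ‖Matrix.det (Matrix.of fun i j => wmon W d (E d i) (a j))‖ := by
    intro d a
    have h := Matrix.det_permute (σ d) (Matrix.of fun i j => wmon W d (E d i) (a j))
    have h2 : (Matrix.of fun i j => wmon W d (E' d i) (a j)) =
      (Matrix.of fun i j => wmon W d (E d i) (a j)).submatrix (σ d) id := rfl
    rw [h2, h, norm_mul]
    rcases Int.units_eq_one_or (Equiv.Perm.sign (σ d)) with h | h <;> simp [h]
  have hV0 : ∀ d, 0 ≤ V d := fun d => by rw [← hV2]; exact norm_nonneg _
  have key := key_submult W hW R hR hbd E' hE' hEs V (fun d a => by rw [hdet]; exact hV1 d a)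
    (fun d => ⟨A d, by rw [hdet]; exact hV2 d⟩)
  have key0 : ∀ d, V d ≤ (sdim n d).factorial * R ^ (d * sdim n d) := by
    intro d
    have h := det_upper (sdim n d) (fun i => wmon W d (E d i)) (fun i => wmon W d (E d i))
      (fun _ => R ^ d) (fun i => by simp)
      (fun i z => hbd d _ (((hE d).2 _).2 ⟨i, rfl⟩) z) (A d)
    rw [hV2] at h
    simpa [pow_mul] using h
  have hroot : ∀ d : ℕ, 1 ≤ d → (V d / R ^ (d * sdim n d)) ^ (1 / (d * sdim n d) : ℝ) =
      (V d) ^ (1 / (d * sdim n d) : ℝ) / R := by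
    intro d hd
    have hs : (0 : ℝ) < sdim n d := by exact_mod_cast sdim_pos n d
    have hd' : (0 : ℝ) < d := by exact_mod_cast hd
    rw [Real.div_rpow (hV0 d) (by positivity)]
    congr 1
    rw [← Real.rpow_natCast, ← Real.rpow_mul hR.le]
    push_cast
    rw [mul_one_div, div_self (by positivity), Real.rpow_one]
  have hlim := limit_aux n (fun d => V d / R ^ (d * sdim n d))
    (fun d => div_nonneg (hV0 d) (by positivity))
    (fun d => by rw [div_le_iff₀ (by positivity)]; exact key0 d)
    (fun d k q hq hd => by
      rw [div_le_iff₀ (by positivity)]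
      refine (key d k q hq hd).trans (le_of_eq ?_)
      ring) (t / R) (t' / R) (by positivity) (by gcongr)
    ((hfreq.and_eventually (eventually_ge_atTop 1)).mono fun k ⟨hk, hk1⟩ => by
      rw [hroot k hk1]; gcongr)
  filter_upwards [hlim, eventually_ge_atTop 1] with d hd hd1
  rw [hroot d hd1] at hd
  exact (div_lt_div_iff_of_pos_right hR).1 hd

lemma Jd_lower {n : ℕ} (E : ∀ d, Fin (sdim n d) → (Fin n → ℕ)) (hE : ∀ d, IsEnum n d (E d))
    (H : Set (Pt n)) [CompactSpace H]
    (M : ℝ) (hM : 0 < M) (hML : MarkovLip n H M)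
    (ν : Measure H) (hν : ν Set.univ ≤ 1)
    (T r₀ : ℝ) (hr₀ : 0 < r₀)
    (hdens : ∀ z₀ : H, ∀ r : ℝ, 0 < r → r < r₀ →
      ENNReal.ofReal (r ^ T) ≤ ν (Metric.ball z₀ r))
    (w : MvPolynomial ((Fin n) ⊕ (Fin n)) ℝ)
    (hwpos : ∀ z ∈ H, 0 < MvPolynomial.eval (realCoords z) w)
    (Q : H → ℝ) (hQ : ∀ z : H, Q z = -Real.log (MvPolynomial.eval (realCoords (z : Pt n)) w))
    (A : ∀ d : ℕ, Fin (sdim n d) → H) (V : ℕ → ℝ)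
    (hV1 : ∀ d (a : Fin (sdim n d) → H),
      ‖Matrix.det (Matrix.of fun i j => wmon (wt H w) d (E d i) (a j))‖ ≤ V d)
    (hV2 : ∀ d, ‖Matrix.det (Matrix.of fun i j => wmon (wt H w) d (E d i) (A d j))‖ = V d)
    (μ : ProbabilityMeasure H)
    (hconv : Tendsto (fun d => empPM (sdim_pos n d).ne' (A d)) atTop (𝓝 μ))
    (G : Set (ProbabilityMeasure H)) (hG : IsOpen G) (hμ : μ ∈ G) :
    ∃ c : ℕ → ℝ, Tendsto c atTop (𝓝 1) ∧ ∀ᶠ d in atTop,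
      ENNReal.ofReal (c d * (V d) ^ (1 / (d * sdim n d) : ℝ)) ≤ Jd n d (E d) H ν Q G := by
  have hV0 : ∀ d, 0 ≤ V d := fun d => by rw [← hV2]; exact norm_nonneg _
  have hfin : IsFiniteMeasure ν := ⟨hν.trans_lt ENNReal.one_lt_top⟩
  set g : ℝ := 1 + (w.totalDegree : ℝ) with hg
  have hg0 : 0 < g := by positivity
  set C : ℝ := 4 * M * ((n : ℝ) + 1) ^ n * g ^ 2 with hC
  have hC0 : 0 < C := by positivity
  let r : ℕ → ℝ := fun d => (C * (d : ℝ) ^ (n + 2))⁻¹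
  have hr : Tendsto r atTop (𝓝 0) := by
    refine Tendsto.inv_tendsto_atTop ?_
    refine Tendsto.const_mul_atTop hC0 ?_
    exact (tendsto_pow_atTop (by omega)).comp tendsto_natCast_atTop_atTop
  refine ⟨fun d => ((1 / 2 : ℝ) * (d : ℝ) ^ 0) ^ (1 / (d : ℝ)) *
    (C * (d : ℝ) ^ (n + 2)) ^ ((-T / 2) / (d : ℝ)), ?_, ?_⟩
  · simpa using (poly_root_tendsto (1 / 2) (by norm_num) 0 1).mul
      (poly_root_tendsto C hC0 (n + 2) (-T / 2))
  filter_upwards [emp_close A μ hconv r hr G hG hμ, hr.eventually_lt_const hr₀,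
    eventually_ge_atTop 1] with d hclose hrr hd1
  have hs : (0 : ℝ) < sdim n d := by exact_mod_cast sdim_pos n d
  have hd' : (0 : ℝ) < d := by exact_mod_cast hd1
  have hr0 : 0 < r d := by simp only [r]; positivity
  let box : Set (Fin (sdim n d) → H) := Set.pi Set.univ fun j => Metric.ball (A d j) (r d)
  have hbox : MeasurableSet box := MeasurableSet.univ_pi fun j => measurableSet_ball
  have hsub : box ⊆ Gtilde d H G := fun a ha => hclose a fun j => ha j (Set.mem_univ j)
  have hlow : ∀ a ∈ box, ENNReal.ofReal ((V d / 2) ^ 2) ≤ (absVDMQ n d (E d) H Q a) ^ 2 := by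
    intro a ha
    rw [absVDMQ_eq d (E d) H w hwpos Q hQ, ENNReal.ofReal_pow (by have := hV0 d; positivity)]
    refine pow_le_pow_left' (ENNReal.ofReal_le_ofReal ?_) 2
    have hp := det_perturb hM hML (d * (1 + w.totalDegree))
      (fun i z => (∏ k, (z k) ^ (E d i k)) *
        ((MvPolynomial.eval (realCoords z) w : ℝ) : ℂ) ^ d)
      (fun i => wmon_RP w d (E d i) (((hE d).2 _).2 ⟨i, rfl⟩)) (V d) (hV1 d) a (A d) (r d)
      (fun j => (ha j (Set.mem_univ j)).le)
    change ‖Matrix.det (Matrix.of fun i j => wmon (wt H w) d (E d i) (a j)) -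
      Matrix.det (Matrix.of fun i j => wmon (wt H w) d (E d i) (A d j))‖ ≤ _ at hp
    have hsmall : (sdim n d : ℝ) * (2 * M * ((d * (1 + w.totalDegree) : ℕ) : ℝ) ^ 2 * V d * r d)
        ≤ V d / 2 := by
      have e1 : ((d * (1 + w.totalDegree) : ℕ) : ℝ) = d * g := by push_cast; rfl
      rw [e1]
      have := hV0 d
      calc (sdim n d : ℝ) * (2 * M * (d * g) ^ 2 * V d * r d)
          ≤ (((n : ℝ) + 1) ^ n * (d : ℝ) ^ n) * (2 * M * (d * g) ^ 2 * V d * r d) := by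
            have := sdim_le n d hd1
            gcongr
        _ = V d / 2 := by
            simp only [r, hC]
            field_simp
            ring
    have h3 := norm_sub_norm_le (Matrix.det (Matrix.of fun i j => wmon (wt H w) d (E d i) (A d j)))
      (Matrix.det (Matrix.of fun i j => wmon (wt H w) d (E d i) (a j)))
    rw [norm_sub_rev, hV2] at h3
    linarith
  have hintegral : ENNReal.ofReal ((V d / 2) ^ 2 * ((r d) ^ T) ^ (sdim n d)) ≤
      ∫⁻ a in Gtilde d H G, (absVDMQ n d (E d) H Q a) ^ 2
      ∂(Measure.pi fun _ : Fin (sdim n d) => ν) := by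
    calc ENNReal.ofReal ((V d / 2) ^ 2 * ((r d) ^ T) ^ (sdim n d))
        = ENNReal.ofReal ((V d / 2) ^ 2) * (ENNReal.ofReal ((r d) ^ T)) ^ (sdim n d) := by
          rw [ENNReal.ofReal_mul (by positivity), ENNReal.ofReal_pow (by positivity) (sdim n d)]
      _ ≤ ENNReal.ofReal ((V d / 2) ^ 2) * (Measure.pi fun _ : Fin (sdim n d) => ν) box := by
          gcongr
          rw [Measure.pi_pi]
          calc (ENNReal.ofReal ((r d) ^ T)) ^ (sdim n d)
              = ∏ _j : Fin (sdim n d), ENNReal.ofReal ((r d) ^ T) := by simp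
            _ ≤ _ := Finset.prod_le_prod' fun j _ => hdens (A d j) (r d) hr0 hrr
      _ = ∫⁻ a in box, ENNReal.ofReal ((V d / 2) ^ 2)
            ∂(Measure.pi fun _ : Fin (sdim n d) => ν) := by rw [setLIntegral_const]
      _ ≤ ∫⁻ a in box, (absVDMQ n d (E d) H Q a) ^ 2
            ∂(Measure.pi fun _ : Fin (sdim n d) => ν) := setLIntegral_mono' hbox hlow
      _ ≤ _ := lintegral_mono_set hsub
  rw [Jd]
  refine le_trans ?_ (ENNReal.rpow_le_rpow hintegral (by positivity))
  have hVd := hV0 d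
  rw [ENNReal.ofReal_rpow_of_nonneg (by positivity) (by positivity)]
  refine ENNReal.ofReal_le_ofReal ?_
  have e1 : ((V d / 2) ^ 2 * ((r d) ^ T) ^ (sdim n d)) ^ (1 / (2 * d * sdim n d) : ℝ) =
      ((1 / 2 : ℝ) ^ (1 / (d * sdim n d) : ℝ) * (C * (d : ℝ) ^ (n + 2)) ^ ((-T / 2) / (d : ℝ)))
        * (V d) ^ (1 / (d * sdim n d) : ℝ) := by
    rw [Real.mul_rpow (by positivity) (by positivity), ← Real.rpow_natCast (V d / 2) 2,
      ← Real.rpow_mul (by positivity), ← Real.rpow_natCast, ← Real.rpow_mul hr0.le,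
      ← Real.rpow_mul hr0.le, div_eq_mul_one_div (V d) 2, Real.mul_rpow hVd (by norm_num)]
    have x1 : ((2 : ℕ) : ℝ) * (1 / (2 * d * sdim n d) : ℝ) = 1 / (d * sdim n d) := by
      push_cast; field_simp
    have x2 : T * (sdim n d : ℝ) * (1 / (2 * d * sdim n d) : ℝ) = -((-T / 2) / d) := by
      field_simp
    rw [x1, x2]
    simp only [r]
    rw [Real.inv_rpow (by positivity), Real.rpow_neg (by positivity), inv_inv]
    ring
  rw [e1]
  have e2 : ((1 / 2 : ℝ) * (d : ℝ) ^ 0) ^ (1 / (d : ℝ)) ≤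
      (1 / 2 : ℝ) ^ (1 / (d * sdim n d) : ℝ) := by
    rw [pow_zero, mul_one]
    refine Real.rpow_le_rpow_of_exponent_ge (by norm_num) (by norm_num) ?_
    have : (1 : ℝ) ≤ sdim n d := by exact_mod_cast sdim_pos n d
    exact one_div_le_one_div_of_le hd' (by nlinarith)
  gcongr

/-- **Lemma (lower bound at weighted equilibrium measures, Step 1).** Let `H ⊂ ℂⁿ` be compact
convex satisfying the Markov–Lipschitz inequality, `ν` a measure on `H` of mass at most `1`
with the uniform density bound, `w` a real polynomial with `w > 0` on `H`, `Q = -log w`.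
If the empirical measures of weighted Fekete configurations `a^{*,d}` for `(H, Q)` converge
weak-* to `μ`, then `liminf_{d→∞} log J_d^Q(μ,G) ≥ log δ̄^w(H)` for every open neighborhood
`G` of `μ`; consequently `inf_{G ∋ μ} liminf_{d→∞} log J_d^Q(μ,G) ≥ log δ̄^w(H)`. -/
theorem liminf_log_Jd_ge_log_deltaBar_of_fekete
    (n : ℕ) (hn : 1 ≤ n)
    (E : ∀ d, Fin (sdim n d) → (Fin n → ℕ)) (hE : ∀ d, IsEnum n d (E d))
    (H : Set (Pt n)) (hHcomp : IsCompact H) (hHconv : Convex ℝ H)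
    (M : ℝ) (hM : 0 < M) (hML : MarkovLip n H M)
    (ν : Measure H) (hν : ν Set.univ ≤ 1)
    (T r₀ : ℝ) (hT : 0 < T) (hr₀ : 0 < r₀)
    (hdens : ∀ z₀ : H, ∀ r : ℝ, 0 < r → r < r₀ →
      ENNReal.ofReal (r ^ T) ≤ ν (Metric.ball z₀ r))
    (w : MvPolynomial ((Fin n) ⊕ (Fin n)) ℝ)
    (hwpos : ∀ z ∈ H, 0 < MvPolynomial.eval (realCoords z) w)
    (Q : H → ℝ) (hQ : ∀ z : H, Q z = -Real.log (MvPolynomial.eval (realCoords (z : Pt n)) w))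
    (A : ∀ d : ℕ, Fin (sdim n d) → H)
    (hFekete : ∀ (d : ℕ) (a : Fin (sdim n d) → H),
      absVDMQ n d (E d) H Q a ≤ absVDMQ n d (E d) H Q (A d))
    (μ : ProbabilityMeasure H)
    (hconv : Tendsto (fun d => empPM (sdim_pos n d).ne' (A d)) atTop (𝓝 μ)) :
    (∀ G : Set (ProbabilityMeasure H), IsOpen G → μ ∈ G →
      ENNReal.log (deltaBar n E H Q) ≤
        liminf (fun d => ENNReal.log (Jd n d (E d) H ν Q G)) atTop) ∧
    ENNReal.log (deltaBar n E H Q) ≤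
      ⨅ G ∈ {G : Set (ProbabilityMeasure H) | IsOpen G ∧ μ ∈ G},
        liminf (fun d => ENNReal.log (Jd n d (E d) H ν Q G)) atTop := by
  have hforall : ∀ G : Set (ProbabilityMeasure H), IsOpen G → μ ∈ G →
      ENNReal.log (deltaBar n E H Q) ≤
        liminf (fun d => ENNReal.log (Jd n d (E d) H ν Q G)) atTop := by
    intro G hG hμ
    have : CompactSpace H := isCompact_iff_compactSpace.1 hHcomp
    have : Nonempty H := ⟨A 0 ⟨0, sdim_pos n 0⟩⟩
    let V : ℕ → ℝ := fun d =>
      ‖Matrix.det (Matrix.of fun i j => wmon (wt H w) d (E d i) (A d j))‖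
    have hV0 : ∀ d, 0 ≤ V d := fun d => norm_nonneg _
    have hV1 : ∀ d (a : Fin (sdim n d) → H),
        ‖Matrix.det (Matrix.of fun i j => wmon (wt H w) d (E d i) (a j))‖ ≤ V d := by
      intro d a
      have h := hFekete d a
      rw [absVDMQ_eq d (E d) H w hwpos Q hQ, absVDMQ_eq d (E d) H w hwpos Q hQ] at h
      exact (ENNReal.ofReal_le_ofReal_iff (norm_nonneg _)).1 h
    have hsup : ∀ d, (⨆ a : Fin (sdim n d) → H, absVDMQ n d (E d) H Q a) ^
        (1 / (d * sdim n d) : ℝ) = ENNReal.ofReal ((V d) ^ (1 / (d * sdim n d) : ℝ)) := by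
      intro d
      have h1 : (⨆ a : Fin (sdim n d) → H, absVDMQ n d (E d) H Q a) = ENNReal.ofReal (V d) := by
        refine le_antisymm (iSup_le fun a => ?_) ?_
        · rw [absVDMQ_eq d (E d) H w hwpos Q hQ]
          exact ENNReal.ofReal_le_ofReal (hV1 d a)
        · refine le_iSup_of_le (A d) ?_
          rw [absVDMQ_eq d (E d) H w hwpos Q hQ]
      rw [h1, ENNReal.ofReal_rpow_of_nonneg (hV0 d) (by positivity)]
    obtain ⟨R, hR, hbd⟩ := wmon_bound hHcomp w
    have hWc : Continuous (wt H w) := (continuous_eval_realCoords w).comp continuous_subtype_val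
    obtain ⟨c, hc, hJ⟩ := Jd_lower E hE H M hM hML ν hν T r₀ hr₀ hdens w hwpos Q hQ A V hV1
      (fun _ => rfl) μ hconv G hG hμ
    have hmain : deltaBar n E H Q ≤ liminf (fun d => Jd n d (E d) H ν Q G) atTop := by
      unfold deltaBar
      simp only [hsup]
      by_contra hcon
      rw [not_le] at hcon
      obtain ⟨y1, hy1, hy1'⟩ := ENNReal.lt_iff_exists_nnreal_btwn.1 hcon
      obtain ⟨y3, hy3, hy3'⟩ := ENNReal.lt_iff_exists_nnreal_btwn.1 hy1'
      have hy13 : (y1 : ℝ) < y3 := by exact_mod_cast hy3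
      obtain ⟨y2, hy12, hy23⟩ := exists_between hy13
      have hy2 : 0 < y2 := lt_of_le_of_lt y1.2 hy12
      have hf1 : ∃ᶠ d in atTop, Jd n d (E d) H ν Q G < y1 := frequently_lt_of_liminf_lt (by isBoundedDefault) hy1
      have hf2 : ∃ᶠ d in atTop, (V d) ^ (1 / (d * sdim n d) : ℝ) < y2 := by
        have hc' : ∀ᶠ d in atTop, (y1 : ℝ) / y2 < c d :=
          hc.eventually_const_lt ((div_lt_one hy2).2 hy12)
        refine (hf1.and_eventually (hJ.and hc')).mono ?_
        rintro d ⟨h1, h2, h3⟩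
        have h4 := h2.trans_lt h1
        by_contra h5
        rw [not_lt] at h5
        have h6 : (y1 : ℝ) ≤ c d * (V d) ^ (1 / (d * sdim n d) : ℝ) := by
          calc (y1 : ℝ) = y1 / y2 * y2 := by field_simp
            _ ≤ _ := mul_le_mul h3.le h5 hy2.le ((div_nonneg y1.2 hy2.le).trans h3.le)
        have h7 := ENNReal.ofReal_le_ofReal h6
        rw [ENNReal.ofReal_coe_nnreal] at h7
        exact absurd h4 (not_lt.2 h7)
      have hev := limit_main (wt H w) hWc R hR hbd E hE A V hV1 (fun _ => rfl) y2 y3 hy2 hy23 hf2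
      have hle : limsup (fun d : ℕ => ENNReal.ofReal ((V d) ^ (1 / (d * sdim n d) : ℝ))) atTop
          ≤ (y3 : ℝ≥0∞) := by
        refine limsup_le_of_le (by isBoundedDefault) (hev.mono fun d hd => ?_)
        rw [← ENNReal.ofReal_coe_nnreal]
        exact ENNReal.ofReal_le_ofReal hd.le
      exact absurd hy3' (not_lt.2 hle)
    have hlog := ENNReal.logOrderIso.liminf_apply (f := atTop)
      (u := fun d => Jd n d (E d) H ν Q G) (by isBoundedDefault) (by isBoundedDefault)
      (by isBoundedDefault) (by isBoundedDefault)
    simp only [ENNReal.logOrderIso_apply] at hlog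
    rw [← hlog]
    exact ENNReal.log_monotone hmain
  exact ⟨hforall, le_iInf₂ fun G hG => hforall G hG.1 hG.2⟩

end
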